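/- If a is a nonzero completely strongly hollow element of a multiplicative lattice Q, then κ(a) = ⋁{ k | a ≰ k } is completely strongly irreducible: whenever ⋀_{i∈Ω} r_i ≤ κ(a) for a family {r_i}, there exists i with r_i ≤ κ(a). -/

import Mathlib

/-- A multiplicative lattice: a complete lattice with a commutative, associative
multiplication distributing over arbitrary joins, with the top element as identity. -/
class MulLattice (Q : Type*) extends CompleteLattice Q, CommMonoid Q where
  mul_sSup : ∀ (a : Q) (s : Set Q), a * sSup s = ⨆ x ∈ s, a * x
  one_eq_top : (1 : Q) = ⊤

section OrderDefs
variable {Q : Type*} [CompleteLattice Q]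

/-- `a` is strongly hollow if `a ≤ j ⊔ k` implies `a ≤ j` or `a ≤ k`. -/
def StronglyHollow (a : Q) : Prop := ∀ j k : Q, a ≤ j ⊔ k → a ≤ j ∨ a ≤ k

/-- `a` is completely strongly hollow if whenever `a` is below an arbitrary join,
it is below one of the joinands. -/
def CompletelyStronglyHollow (a : Q) : Prop :=
  ∀ s : Set Q, a ≤ sSup s → ∃ x ∈ s, a ≤ x

/-- `κ(a)` is the join of all elements not above `a`. -/
def kappa (a : Q) : Q := sSup {k : Q | ¬ a ≤ k}

end OrderDefs

/-- The mlResidual `(a : b)`. -/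
def mlResidual {Q : Type*} [MulLattice Q] (a b : Q) : Q := sSup {x : Q | x * b ≤ a}

/-- Complete strong irreducibility of `p`, the order dual of complete strong hollowness. Families
`{r_i}` are encoded as sets, so the empty family forces `p ≠ ⊤`. -/
def CompletelyStronglyIrreducible {Q : Type*} [CompleteLattice Q] (p : Q) : Prop :=
  ∀ s : Set Q, sInf s ≤ p → ∃ r ∈ s, r ≤ p

namespace CompletelyStronglyHollow

variable {Q : Type*} [CompleteLattice Q] {a x : Q}

theorem not_le_kappa (ha : CompletelyStronglyHollow a) : ¬ a ≤ kappa a := by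
  intro h
  obtain ⟨k, hk, hak⟩ := ha _ h
  exact hk hak

theorem le_kappa_iff (ha : CompletelyStronglyHollow a) : x ≤ kappa a ↔ ¬ a ≤ x where
  mp hx hax := ha.not_le_kappa (hax.trans hx)
  mpr hax := le_sSup hax

end CompletelyStronglyHollow

theorem stmt10_general {Q : Type*} [CompleteLattice Q] {a : Q}
    (ha : CompletelyStronglyHollow a) : CompletelyStronglyIrreducible (kappa a) := by
  intro s hs
  have h_not_le : ¬ a ≤ sInf s := ha.le_kappa_iff.mp hs
  simpa only [le_sInf_iff, not_forall, exists_prop, ha.le_kappa_iff] using h_not_le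

theorem stmt10 {Q : Type*} [MulLattice Q] (a : Q) (ha : a ≠ ⊥)
    (hcsh : CompletelyStronglyHollow a) :
    ∀ s : Set Q, sInf s ≤ kappa a → ∃ r ∈ s, r ≤ kappa a :=
  stmt10_general hcsh
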